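/- arXiv:0905.2245 — 2 statements merged into one kernel-verified Lean document; each statement's English description precedes it below -/
import Mathlib

section
/- Let R be a basic left Harada algebra as below, let Q_1,…,Q_k and Q'_1,…,Q'_l be indecomposable projective right R-modules, and let f : Q_1 ⊕ ⋯ ⊕ Q_k → Q'_1 ⊕ ⋯ ⊕ Q'_l be an injective homomorphism. Then k ≤ l and there exist automorphisms φ of Q_1 ⊕ ⋯ ⊕ Q_k and ψ of Q'_1 ⊕ ⋯ ⊕ Q'_l and an injection σ : {1,…,k} → {1,…,l} such that, writing ψ ∘ f ∘ φ^{-1} in matrix form with respect to the direct sum decompositions, its (b,a)-component Q_a → Q'_b is zero whenever b ≠ σ(a) (i.e., after reindexing the summands of the target, ψ f φ^{-1} is a diagonal matrix of monomorphisms f_a : Q_a → Q'_{σ(a)} together with zero rows). -/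
/-!
Common setup.  `K` is an algebraically closed field and `R` a finite-dimensional associative
unital `K`-algebra.  Right `R`-modules are formalized as modules over the opposite ring `Rᵐᵒᵖ`
(so that `MulOpposite.op r • x = x * r`).
-/

open MulOpposite

/-- The right ideal `xR` of a ring `R`, as a submodule of `R` over `Rᵐᵒᵖ`. -/
def rightIdeal (R : Type) [Ring R] (x : R) : Submodule Rᵐᵒᵖ R :=
  Submodule.span Rᵐᵒᵖ {x}

/-- The Jacobson radical of a submodule `N` (the intersection of the maximal submodules of the
module `N`), viewed as a submodule of the ambient module.  Iterating this operation gives the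
iterated radicals `rad^k`. -/
def radSub {A M : Type} [Ring A] [AddCommGroup M] [Module A M] (N : Submodule A M) :
    Submodule A M :=
  Submodule.map N.subtype (sInf {P : Submodule A ↥N | IsCoatom P})

/-- A module is indecomposable if it is nonzero and admits no nontrivial direct sum
decomposition. -/
def IsIndecomposableMod (A M : Type) [Ring A] [AddCommGroup M] [Module A M] : Prop :=
  Nontrivial M ∧ ∀ N N' : Submodule A M, IsCompl N N' → N = ⊥ ∨ N' = ⊥

/-- A module has projective dimension at most one iff it admits a surjection from a projective
module with projective kernel. -/
def PdLeOne (A : Type) [Ring A] (M : Type) [AddCommGroup M] [Module A M] : Prop :=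
  ∃ (P : ModuleCat.{0} A) (f : ↥P →ₗ[A] M),
    Module.Projective A ↥P ∧ Function.Surjective f ∧
      Module.Projective A ↥(LinearMap.ker f)

/-- `Ext¹_A(M,N) = 0`, expressed by the splitting of every short exact sequence
`0 → N → E → M → 0`. -/
def Ext1Zero (A : Type) [Ring A] (M N : Type) [AddCommGroup M] [Module A M]
    [AddCommGroup N] [Module A N] : Prop :=
  ∀ (E : ModuleCat.{0} A) (i : N →ₗ[A] ↥E) (p : ↥E →ₗ[A] M),
    Function.Injective i → Function.Surjective p → LinearMap.range i = LinearMap.ker p →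
    ∃ s : M →ₗ[A] ↥E, p.comp s = LinearMap.id

/-- `X ∈ add T` : `X` is a direct summand of a finite direct sum of copies of `T`. -/
def InAdd (A : Type) [Ring A] (T X : Type) [AddCommGroup T] [Module A T]
    [AddCommGroup X] [Module A X] : Prop :=
  ∃ (k : ℕ) (f : X →ₗ[A] (Fin k → T)) (g : (Fin k → T) →ₗ[A] X),
    g.comp f = LinearMap.id

/-- `T` is a (finitely generated) tilting right `R`-module: projective dimension at most one,
no self-extensions, and there is a short exact sequence `0 → R → T₀ → T₁ → 0` with
`T₀, T₁ ∈ add T`. -/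
def IsTiltingRight (R : Type) [Ring R] (T : Type) [AddCommGroup T] [Module Rᵐᵒᵖ T] : Prop :=
  Module.Finite Rᵐᵒᵖ T ∧ PdLeOne Rᵐᵒᵖ T ∧ Ext1Zero Rᵐᵒᵖ T T ∧
    ∃ (T₀ T₁ : ModuleCat.{0} Rᵐᵒᵖ) (f : R →ₗ[Rᵐᵒᵖ] ↥T₀) (g : ↥T₀ →ₗ[Rᵐᵒᵖ] ↥T₁),
      InAdd Rᵐᵒᵖ T ↥T₀ ∧ InAdd Rᵐᵒᵖ T ↥T₁ ∧
        Function.Injective f ∧ Function.Surjective g ∧ LinearMap.range f = LinearMap.ker g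

/-- `T` is basic: it is an (internal) direct sum of pairwise non-isomorphic indecomposable
submodules. -/
def IsBasicMod (A : Type) [Ring A] (T : Type) [AddCommGroup T] [Module A T] : Prop :=
  ∃ (k : ℕ) (N : Fin k → Submodule A T),
    DirectSum.IsInternal N ∧ (∀ a, IsIndecomposableMod A ↥(N a)) ∧
      ∀ a b, a ≠ b → IsEmpty (↥(N a) ≃ₗ[A] ↥(N b))

/-- The setoid identifying isomorphic modules (among those with property `P`). -/
def isoSetoid (A : Type) [Ring A] (P : ModuleCat.{0} A → Prop) :
    Setoid {M : ModuleCat.{0} A // P M} where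
  r M N := Nonempty (↥M.1 ≃ₗ[A] ↥N.1)
  iseqv := ⟨fun M => ⟨LinearEquiv.refl A ↥M.1⟩, fun ⟨e⟩ => ⟨e.symm⟩,
    fun ⟨e⟩ ⟨f⟩ => ⟨e.trans f⟩⟩

/-- The data exhibiting a ring `R` as a basic left Harada algebra:
a complete set `{e i j}` of orthogonal primitive idempotents with pairwise non-isomorphic
right ideals `(e i j)R` (`R` is basic), such that each `(e i 0)R` is an injective right
module, and `(e i j)R ≅ rad ((e i (j-1))R)` for `j ≥ 1`.  (Indices are shifted by one from
the paper: the paper's `e_{ij}` is `e i (j-1)` here.) -/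
structure HaradaData (R : Type) [Ring R] : Type where
  m : ℕ
  hm : 0 < m
  n : Fin m → ℕ
  hn : ∀ i, 0 < n i
  e : (i : Fin m) → Fin (n i) → R
  idem : ∀ i j, IsIdempotentElem (e i j)
  orth : ∀ p q : Σ i : Fin m, Fin (n i), p ≠ q → e p.1 p.2 * e q.1 q.2 = 0
  sum_eq_one : ∑ p : Σ i : Fin m, Fin (n i), e p.1 p.2 = 1
  indec : ∀ i j, IsIndecomposableMod Rᵐᵒᵖ ↥(rightIdeal R (e i j))
  basic : ∀ p q : Σ i : Fin m, Fin (n i), p ≠ q →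
    IsEmpty (↥(rightIdeal R (e p.1 p.2)) ≃ₗ[Rᵐᵒᵖ] ↥(rightIdeal R (e q.1 q.2)))
  inj : ∀ i, Module.Injective Rᵐᵒᵖ ↥(rightIdeal R (e i ⟨0, hn i⟩))
  rad_iso : ∀ (i : Fin m) (j : Fin (n i)), 0 < j.val →
    Nonempty (↥(rightIdeal R (e i j)) ≃ₗ[Rᵐᵒᵖ]
      ↥(radSub (rightIdeal R (e i ⟨j.val - 1, Nat.lt_of_le_of_lt (Nat.sub_le j.val 1) j.isLt⟩))))

variable {R : Type} [Ring R]

/-- `H.P i j = rad^j ((e i 0)R)`; this is the paper's `P_{i,j+1} = rad^j (e_{i1}R)`,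
a submodule of `R`. -/
def HaradaData.P (H : HaradaData R) (i : Fin H.m) (j : Fin (H.n i)) : Submodule Rᵐᵒᵖ R :=
  radSub^[j.val] (rightIdeal R (H.e i ⟨0, H.hn i⟩))

/-- The quotient module `P_{ik}/P_{il}` (for `l ≥ k` we have `H.P i l ≤ H.P i k`). -/
abbrev HaradaData.Quot (H : HaradaData R) (i : Fin H.m) (k l : Fin (H.n i)) : Type :=
  ↥(H.P i k) ⧸ Submodule.comap (H.P i k).subtype (H.P i l)

/-- The last index (the paper's `n_i`) in `Fin (H.n i)`. -/
def HaradaData.last (H : HaradaData R) (i : Fin H.m) : Fin (H.n i) :=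
  ⟨H.n i - 1, Nat.sub_lt (H.hn i) one_pos⟩

/-- The right ideal `I = ⊕_{i,j} rad^{n_i - j + 1}(e_{ij}R)` of the paper. -/
def HaradaData.I (H : HaradaData R) : Submodule Rᵐᵒᵖ R :=
  ⨆ p : Σ i : Fin H.m, Fin (H.n i),
    radSub^[H.n p.1 - p.2.val] (rightIdeal R (H.e p.1 p.2))

/-- The submodule `T·I` of a right module `T`, for `I` a right ideal of `R`. -/
def smulSub (I : Submodule Rᵐᵒᵖ R) (T : Type) [AddCommGroup T] [Module Rᵐᵒᵖ T] :
    Submodule Rᵐᵒᵖ T :=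
  Submodule.span Rᵐᵒᵖ {x : T | ∃ (t : T) (r : R), r ∈ I ∧ x = op r • t}

/-!
Every indecomposable projective right module `Q` over a left Harada ring is isomorphic to some
`radʲ E` with `E` indecomposable injective (hence uniform), and `radʲ E` is comparable with every
submodule of `E`, those strictly above it being projective. Two consequences for an injective map
`u : Q → Q'` between indecomposable projectives: a map `g` from a third one, `P`, to `Q'` factors
through `u`, or else `u` factors through `g` by an embedding `Q → P`; and a map `g` from `Q` to a
third one, `P`, extends along `u`, or else `u` extends along `g` by an embedding `P → Q'`.

This makes Gaussian elimination work for an injective matrix. Among the columns not yet diagonalized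
take one whose module has maximal length, and in it an injective entry whose target has minimal
length; such an entry exists because the source is uniform. The embeddings in the alternatives above
are then isomorphisms, so the whole row and column of this entry are multiples of it.
-/

section Preliminaries

variable {A : Type*} [Ring A]

theorem exists_comp_eq_of_range_le {P Q M : Type*} [AddCommGroup P] [Module A P]
    [AddCommGroup Q] [Module A Q] [AddCommGroup M] [Module A M] {u : Q →ₗ[A] M}
    (hu : Function.Injective u) {g : P →ₗ[A] M} (hg : LinearMap.range g ≤ LinearMap.range u) :
    ∃ h : P →ₗ[A] Q, u ∘ₗ h = g := by
  let e := LinearEquiv.ofInjective u hu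
  refine ⟨e.symm ∘ₗ g.codRestrict _ fun x => hg ⟨x, rfl⟩, LinearMap.ext fun x => ?_⟩
  exact congrArg Subtype.val (e.apply_symm_apply ⟨g x, hg ⟨x, rfl⟩⟩)

theorem bijective_of_injective_of_length_le {M N : Type*} [AddCommGroup M] [Module A M]
    [AddCommGroup N] [Module A N] [IsArtinian A N] [IsNoetherian A N] {h : M →ₗ[A] N}
    (hh : Function.Injective h) (hlen : Module.length A N ≤ Module.length A M) :
    Function.Bijective h := by
  refine ⟨hh, LinearMap.range_eq_top.mp ?_⟩
  by_contra hne
  have hlt := Submodule.length_lt hne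
  rw [← (LinearEquiv.ofInjective h hh).length_eq] at hlt
  exact hlen.not_gt hlt

/-- The automorphism `1 - i s` of `V` attached to maps `i : P → V` and `s : V → P` with
`s i = 0`. Elementary row and column operations on block matrices have this form. -/
def blockTransvection {V P : Type*} [AddCommGroup V] [Module A V] [AddCommGroup P] [Module A P]
    (i : P →ₗ[A] V) (s : V →ₗ[A] P) (hsi : s ∘ₗ i = 0) : V ≃ₗ[A] V :=
  have hsq : (i ∘ₗ s) ∘ₗ (i ∘ₗ s) = 0 := by
    rw [LinearMap.comp_assoc, ← LinearMap.comp_assoc s, hsi, LinearMap.zero_comp,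
      LinearMap.comp_zero]
  LinearEquiv.ofLinearMap (LinearMap.id - i ∘ₗ s) (LinearMap.id + i ∘ₗ s)
    (by simp [LinearMap.sub_comp, LinearMap.comp_add, hsq])
    (by simp [LinearMap.add_comp, LinearMap.comp_sub, hsq])

theorem blockTransvection_apply {V P : Type*} [AddCommGroup V] [Module A V] [AddCommGroup P]
    [Module A P] (i : P →ₗ[A] V) (s : V →ₗ[A] P) (hsi : s ∘ₗ i = 0) (x : V) :
    blockTransvection i s hsi x = x - i (s x) :=
  rfl

end Preliminaries

namespace IsIndecomposableMod

variable {A M : Type} [Ring A] [AddCommGroup M] [Module A M]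

theorem injective_of_surjective {N : Type*} [AddCommGroup N] [Module A N] [Nontrivial N]
    [Module.Projective A N] (hM : IsIndecomposableMod A M) {r : M →ₗ[A] N}
    (hr : Function.Surjective r) : Function.Injective r := by
  obtain ⟨s, hs⟩ := Module.projective_lifting_property r LinearMap.id hr
  have hrs (y : N) : r (s y) = y := LinearMap.congr_fun hs y
  have hidem : IsIdempotentElem (s ∘ₗ r) := LinearMap.ext fun x => congrArg s (hrs (r x))
  rcases hM.2 _ _ (LinearMap.IsIdempotentElem.isCompl hidem) with hrange | hker
  · obtain ⟨y, hy⟩ := exists_ne (0 : N)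
    have hsy : s (r (s y)) = 0 := LinearMap.congr_fun (LinearMap.range_eq_bot.mp hrange) (s y)
    rw [hrs] at hsy
    exact absurd (by rw [← hrs y, hsy, map_zero]) hy
  · exact Function.Injective.of_comp (f := s) (LinearMap.ker_eq_bot.mp hker)

section FiniteLength

variable [IsNoetherian A M] [IsArtinian A M]

theorem bijective_or_isNilpotent (hM : IsIndecomposableMod A M) (g : Module.End A M) :
    Function.Bijective g ∨ IsNilpotent g := by
  obtain ⟨n, hn⟩ := Filter.eventually_atTop.mp g.eventually_isCompl_ker_pow_range_pow
  rcases hM.2 _ _ (hn (n + 1) n.le_succ) with hker | hrange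
  · have hpow : Function.Injective (g ^ n * g) := by
      rw [← pow_succ]
      exact LinearMap.ker_eq_bot.mp hker
    have hg : Function.Injective g := Function.Injective.of_comp (f := g ^ n) hpow
    exact Or.inl ⟨hg, IsArtinian.surjective_of_injective_endomorphism g hg⟩
  · exact Or.inr ⟨n + 1, LinearMap.range_eq_bot.mp hrange⟩

theorem bijective_of_comp_eq_left {S : Type*} [AddCommGroup S] [Module A S]
    (hM : IsIndecomposableMod A M) {g : Module.End A M} {p : M →ₗ[A] S} (hp : p ≠ 0)
    (hpg : p ∘ₗ g = p) : Function.Bijective g := by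
  refine (hM.bijective_or_isNilpotent g).resolve_right fun ⟨n, hn⟩ => hp ?_
  have hpow : ∀ n : ℕ, p ∘ₗ (g ^ n) = p := fun n => by
    induction n with
    | zero => rfl
    | succ n ih => rw [pow_succ, Module.End.mul_eq_comp, ← LinearMap.comp_assoc, ih, hpg]
  rw [← hpow n, hn, LinearMap.comp_zero]

theorem bijective_of_comp_eq_right {S : Type*} [AddCommGroup S] [Module A S]
    (hM : IsIndecomposableMod A M) {g : Module.End A M} {i : S →ₗ[A] M} (hi : i ≠ 0)
    (hgi : g ∘ₗ i = i) : Function.Bijective g := by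
  refine (hM.bijective_or_isNilpotent g).resolve_right fun ⟨n, hn⟩ => hi ?_
  have hpow : ∀ n : ℕ, (g ^ n) ∘ₗ i = i := fun n => by
    induction n with
    | zero => rfl
    | succ n ih => rw [pow_succ, Module.End.mul_eq_comp, LinearMap.comp_assoc, hgi, ih]
  rw [← hpow n, hn, LinearMap.zero_comp]

theorem eq_top_or_le_jacobson [Module.Projective A M] (hM : IsIndecomposableMod A M)
    (N : Submodule A M) : N = ⊤ ∨ N ≤ Module.jacobson A M := by
  refine or_iff_not_imp_right.mpr fun hN => ?_
  obtain ⟨P, hP, hNP⟩ : ∃ P : Submodule A M, IsCoatom P ∧ ¬N ≤ P := by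
    by_contra! hle
    exact hN (le_sInf hle)
  have hsurj : Function.Surjective (P.mkQ ∘ₗ N.subtype) := by
    rw [← LinearMap.range_eq_top, LinearMap.range_comp, Submodule.range_subtype,
      Submodule.map_mkQ_eq_top, sup_comm]
    exact hP.2 _ (right_lt_sup.mpr hNP)
  obtain ⟨s, hs⟩ := Module.projective_lifting_property _ P.mkQ hsurj
  have hmkQ : P.mkQ ≠ 0 := fun h0 => hP.1 (by rw [← P.ker_mkQ, h0, LinearMap.ker_zero])
  have hbij : Function.Bijective (N.subtype ∘ₗ s) := hM.bijective_of_comp_eq_left hmkQ hs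
  refine eq_top_iff.mpr fun x _ => ?_
  obtain ⟨y, rfl⟩ := hbij.2 x
  exact (s y).2

theorem nonempty_linearEquiv {P : Type} {S : Type*} [AddCommGroup P] [Module A P]
    [IsNoetherian A P] [IsArtinian A P] [AddCommGroup S] [Module A S] [Module.Projective A M]
    [Module.Projective A P] [Nontrivial S] (hM : IsIndecomposableMod A M)
    (hP : IsIndecomposableMod A P) {p : M →ₗ[A] S} {q : P →ₗ[A] S}
    (hp : Function.Surjective p) (hq : Function.Surjective q) : Nonempty (M ≃ₗ[A] P) := by
  obtain ⟨u, hu⟩ := Module.projective_lifting_property q p hq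
  obtain ⟨v, hv⟩ := Module.projective_lifting_property p q hp
  have hp0 : p ≠ 0 := LinearMap.ne_zero_of_surjective hp
  have hq0 : q ≠ 0 := LinearMap.ne_zero_of_surjective hq
  have hvu : Function.Bijective (v ∘ₗ u) :=
    hM.bijective_of_comp_eq_left hp0 (by rw [← LinearMap.comp_assoc, hv, hu])
  have huv : Function.Bijective (u ∘ₗ v) :=
    hP.bijective_of_comp_eq_left hq0 (by rw [← LinearMap.comp_assoc, hu, hv])
  exact ⟨LinearEquiv.ofBijective u
    ⟨Function.Injective.of_comp (f := v) hvu.1, Function.Surjective.of_comp (g := v) huv.2⟩⟩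

end FiniteLength

end IsIndecomposableMod

/-- A uniform module: it is nonzero and any two nonzero submodules have nonzero intersection. -/
def IsUniformMod (A M : Type*) [Ring A] [AddCommGroup M] [Module A M] : Prop :=
  InfIrred (⊥ : Submodule A M)

theorem IsIndecomposableMod.isUniformMod {A E : Type} [Ring A] [AddCommGroup E] [Module A E]
    [IsNoetherian A E] [IsArtinian A E] [Module.Injective A E] (hE : IsIndecomposableMod A E) :
    IsUniformMod A E := by
  have := hE.1
  refine ⟨not_isMax_bot, fun N N' hNN' => or_iff_not_imp_left.mpr fun hN => ?_⟩
  have hinj : Function.Injective (N.subtype.coprod N'.subtype) := by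
    have hdisj : Disjoint (LinearMap.range N.subtype) (LinearMap.range N'.subtype) := by
      rwa [N.range_subtype, N'.range_subtype, disjoint_iff]
    rw [← LinearMap.ker_eq_bot, LinearMap.ker_coprod_of_disjoint_range _ _ hdisj,
      Submodule.ker_subtype, Submodule.ker_subtype, Submodule.prod_bot]
  obtain ⟨g, hg⟩ := Module.Injective.out _ hinj (N.subtype ∘ₗ LinearMap.fst A N N')
  have hgN : g ∘ₗ N.subtype = N.subtype := LinearMap.ext fun x => by simpa using hg (x, 0)
  have hN0 : N.subtype ≠ 0 := fun h0 => hN (by rw [← N.range_subtype, h0, LinearMap.range_zero])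
  have hgbij : Function.Bijective g := hE.bijective_of_comp_eq_right hN0 hgN
  refine (Submodule.eq_bot_iff N').mpr fun x hx => hgbij.1 ?_
  simpa using hg (0, ⟨x, hx⟩)

namespace IsUniformMod

variable {A M N : Type*} [Ring A] [AddCommGroup M] [Module A M] [AddCommGroup N] [Module A N]

theorem of_injective [Nontrivial M] (hN : IsUniformMod A N) {t : M →ₗ[A] N}
    (ht : Function.Injective t) : IsUniformMod A M := by
  refine ⟨not_isMax_bot, fun X Y hXY => ?_⟩
  have hmap : X.map t ⊓ Y.map t = ⊥ := by rw [← Submodule.map_inf t ht, hXY, Submodule.map_bot]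
  simpa only [← LinearMap.le_ker_iff_map, LinearMap.ker_eq_bot.mpr ht, le_bot_iff] using hN.2 hmap

theorem injective_of_comp {L : Type*} [AddCommGroup L] [Module A L] [Nontrivial M]
    (hN : IsUniformMod A N) {u : M →ₗ[A] N} {g : N →ₗ[A] L}
    (hgu : Function.Injective (g ∘ₗ u)) : Function.Injective g := by
  have hdisj : LinearMap.ker g ⊓ LinearMap.range u = ⊥ := by
    refine eq_bot_iff.mpr ?_
    rintro _ ⟨hx, y, rfl⟩
    have hy : y = 0 := hgu (by simpa using hx)
    simp [hy]
  refine LinearMap.ker_eq_bot.mp ((hN.2 hdisj).resolve_right fun hrange => ?_)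
  obtain ⟨y, hy⟩ := exists_ne (0 : M)
  exact hy (hgu (by simp [LinearMap.range_eq_bot.mp hrange]))

theorem exists_injective_of_pi {κ : Type*} [Finite κ] {L : κ → Type*} [∀ b, AddCommGroup (L b)]
    [∀ b, Module A (L b)] (hM : IsUniformMod A M) {g : M →ₗ[A] (∀ b, L b)}
    (hg : Function.Injective g) : ∃ b, Function.Injective (LinearMap.proj b ∘ₗ g) := by
  have := Fintype.ofFinite κ
  have hinf : Finset.univ.inf (fun b => LinearMap.ker (LinearMap.proj b ∘ₗ g)) = ⊥ := by
    refine eq_bot_iff.mpr fun x hx => hg ?_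
    rw [map_zero]
    exact funext fun b => Submodule.mem_finsetInf.mp hx b (Finset.mem_univ b)
  obtain ⟨b, -, hb⟩ := hM.finset_inf_eq hinf
  exact ⟨b, LinearMap.ker_eq_bot.mp hb⟩

end IsUniformMod

/-- A submodule `W` of `M` comparable with all submodules of `M` (a *waist* of `M`) such that
every submodule not contained in `W` is projective. -/
def IsProjectiveWaist {A M : Type*} [Ring A] [AddCommGroup M] [Module A M]
    (W : Submodule A M) : Prop :=
  ∀ N : Submodule A M, N ≤ W ∨ W ≤ N ∧ Module.Projective A N

namespace IsProjectiveWaist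

theorem comap {A M E : Type*} [Ring A] [AddCommGroup M] [Module A M] [AddCommGroup E]
    [Module A E] {W : Submodule A E} (hW : IsProjectiveWaist W) {t : M →ₗ[A] E}
    (ht : Function.Injective t) : IsProjectiveWaist (W.comap t) := by
  intro N
  refine (hW (N.map t)).imp Submodule.map_le_iff_le_comap.mp fun ⟨hle, hproj⟩ => ⟨?_, ?_⟩
  · exact (Submodule.comap_mono hle).trans_eq (Submodule.comap_map_eq_of_injective ht N)
  · exact Module.Projective.of_equiv' (Submodule.equivMapOfInjective t ht N).symm

variable {A : Type} [Ring A]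

theorem range_le_or {P : Type} {M : Type*} [AddCommGroup P] [Module A P] [AddCommGroup M]
    [Module A M] {W : Submodule A M} (hW : IsProjectiveWaist W) (hW0 : W ≠ ⊥)
    (hP : IsIndecomposableMod A P) (g : P →ₗ[A] M) :
    LinearMap.range g ≤ W ∨ Function.Injective g ∧ W ≤ LinearMap.range g := by
  refine (hW (LinearMap.range g)).imp_right fun ⟨hle, hproj⟩ => ⟨?_, hle⟩
  have : Nontrivial (LinearMap.range g) :=
    (LinearMap.range g).nontrivial_iff_ne_bot.mpr (ne_bot_of_le_ne_bot hW0 hle)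
  exact g.injective_rangeRestrict_iff.mp (hP.injective_of_surjective g.surjective_rangeRestrict)

theorem map_jacobson {P : Type} {E : Type*} [AddCommGroup P] [Module A P] [IsNoetherian A P]
    [IsArtinian A P] [Module.Projective A P] [AddCommGroup E] [Module A E]
    (hP : IsIndecomposableMod A P) {i : P →ₗ[A] E} (hi : Function.Injective i)
    (hW : IsProjectiveWaist (LinearMap.range i)) :
    IsProjectiveWaist ((Module.jacobson A P).map i) := by
  intro N
  rcases hW N with hle | ⟨hle, hproj⟩
  · have hN : (N.comap i).map i = N := Submodule.map_comap_eq_self hle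
    rcases hP.eq_top_or_le_jacobson (N.comap i) with htop | hjac
    · obtain rfl : LinearMap.range i = N := by rw [← hN, htop, Submodule.map_top]
      exact Or.inr ⟨LinearMap.map_le_range,
        Module.Projective.of_equiv' (LinearEquiv.ofInjective i hi)⟩
    · exact Or.inl (hN.ge.trans (Submodule.map_mono hjac))
  · exact Or.inr ⟨LinearMap.map_le_range.trans hle, hproj⟩

end IsProjectiveWaist

/-- An indecomposable module which is a projective waist of a uniform injective module. -/
structure EmbedsAsWaist (A Q : Type) [Ring A] [AddCommGroup Q] [Module A Q] : Prop where
  indecomposable : IsIndecomposableMod A Q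
  exists_embedding : ∃ (E : ModuleCat.{0} A) (i : Q →ₗ[A] E), Module.Injective A E ∧
    IsUniformMod A E ∧ Function.Injective i ∧ IsProjectiveWaist (LinearMap.range i)

namespace EmbedsAsWaist

variable {A Q : Type} [Ring A] [AddCommGroup Q] [Module A Q]

theorem isUniformMod (hQ : EmbedsAsWaist A Q) : IsUniformMod A Q := by
  have := hQ.indecomposable.1
  obtain ⟨E, i, -, hE, hi, -⟩ := hQ.exists_embedding
  exact hE.of_injective hi

theorem isProjectiveWaist_range {M : Type} [AddCommGroup M] [Module A M]
    (hQ : EmbedsAsWaist A Q) (hM : IsUniformMod A M) {u : Q →ₗ[A] M}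
    (hu : Function.Injective u) : IsProjectiveWaist (LinearMap.range u) := by
  have := hQ.indecomposable.1
  obtain ⟨E, i, hE, -, hi, hW⟩ := hQ.exists_embedding
  obtain ⟨t, htu⟩ := Module.Injective.extension_property A _ _ _ u hu i
  have ht : Function.Injective t := hM.injective_of_comp (u := u) (by rwa [htu])
  have hrange : LinearMap.range u = (LinearMap.range i).comap t := by
    rw [← htu, LinearMap.range_comp, Submodule.comap_map_eq_of_injective ht]
  exact hrange ▸ hW.comap ht

variable {P M : Type} [AddCommGroup P] [Module A P] [AddCommGroup M] [Module A M]

theorem exists_comp_eq_or_of_uniform (hQ : EmbedsAsWaist A Q) (hP : IsIndecomposableMod A P)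
    (hM : IsUniformMod A M) {u : Q →ₗ[A] M} (hu : Function.Injective u) (g : P →ₗ[A] M) :
    (∃ h : P →ₗ[A] Q, u ∘ₗ h = g) ∨ ∃ h : Q →ₗ[A] P, Function.Injective h ∧ g ∘ₗ h = u := by
  have := hQ.indecomposable.1
  have hu0 : LinearMap.range u ≠ ⊥ :=
    mt LinearMap.range_eq_bot.mp (LinearMap.ne_zero_of_injective hu)
  rcases (hQ.isProjectiveWaist_range hM hu).range_le_or hu0 hP g with hle | ⟨hg, hle⟩
  · exact Or.inl (exists_comp_eq_of_range_le hu hle)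
  · obtain ⟨h, rfl⟩ := exists_comp_eq_of_range_le hg hle
    exact Or.inr ⟨h, Function.Injective.of_comp (f := g) hu, rfl⟩

theorem exists_eq_comp_or (hQ : EmbedsAsWaist A Q) (hP : IsIndecomposableMod A P)
    {u : M →ₗ[A] P} (hu : Function.Injective u) (g : M →ₗ[A] Q) :
    (∃ h : P →ₗ[A] Q, h ∘ₗ u = g) ∨ ∃ h : Q →ₗ[A] P, Function.Injective h ∧ h ∘ₗ g = u := by
  have := hQ.indecomposable.1
  obtain ⟨E, i, hE, -, hi, hW⟩ := hQ.exists_embedding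
  have hi0 : LinearMap.range i ≠ ⊥ :=
    mt LinearMap.range_eq_bot.mp (LinearMap.ne_zero_of_injective hi)
  obtain ⟨t, htu⟩ := Module.Injective.extension_property A _ _ _ u hu (i ∘ₗ g)
  rcases hW.range_le_or hi0 hP t with hle | ⟨ht, hle⟩
  · obtain ⟨h, rfl⟩ := exists_comp_eq_of_range_le hi hle
    exact Or.inl ⟨h, (LinearMap.cancel_left hi).mp htu⟩
  · obtain ⟨h, rfl⟩ := exists_comp_eq_of_range_le ht hle
    exact Or.inr
      ⟨h, Function.Injective.of_comp (f := t) hi, ((LinearMap.cancel_left ht).mp htu).symm⟩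

end EmbedsAsWaist

section Diagonalization

variable {A ι κ : Type*} [Ring A] [DecidableEq ι] {M : ι → Type*} {N : κ → Type*}
  [∀ a, AddCommGroup (M a)] [∀ a, Module A (M a)] [∀ b, AddCommGroup (N b)] [∀ b, Module A (N b)]

/-- The component `M a → N b` of a map between direct sums; `a` is its column, `b` its row. -/
def entry (g : (∀ a, M a) →ₗ[A] (∀ b, N b)) (a : ι) (b : κ) : M a →ₗ[A] N b :=
  (LinearMap.proj b).comp (g.comp (LinearMap.single A M a))

theorem entry_apply (g : (∀ a, M a) →ₗ[A] (∀ b, N b)) (a : ι) (b : κ) (x : M a) :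
    entry g a b x = g (Pi.single a x) b :=
  rfl

/-- All other entries in the row and in the column of the entry `(a, b)` of `g` vanish. -/
structure IsIsolatedEntry (g : (∀ a, M a) →ₗ[A] (∀ b, N b)) (a : ι) (b : κ) : Prop where
  col_eq_zero : ∀ b', b' ≠ b → entry g a b' = 0
  row_eq_zero : ∀ a', a' ≠ a → entry g a' b = 0

/-- The entry `(a, b)` of `g` is injective, and every other entry in its row and in its column is
a multiple of it, so that it can be used to clear both. -/
structure IsPivot (g : (∀ a, M a) →ₗ[A] (∀ b, N b)) (a : ι) (b : κ) : Prop where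
  injective : Function.Injective (entry g a b)
  exists_row : ∀ a', ∃ h : M a' →ₗ[A] M a, entry g a b ∘ₗ h = entry g a' b
  exists_col : ∀ b', ∃ k : N b →ₗ[A] N b', k ∘ₗ entry g a b = entry g a b'

variable {g : (∀ a, M a) →ₗ[A] (∀ b, N b)} {a₀ : ι} {b₀ : κ}

theorem IsIsolatedEntry.row_ne {c : ι} {d : κ} (h : IsIsolatedEntry g c d) (hc : c ≠ a₀)
    (hentry : entry g a₀ b₀ ≠ 0) : b₀ ≠ d := by
  rintro rfl
  exact hentry (h.row_eq_zero a₀ hc.symm)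

theorem IsIsolatedEntry.injective_entry {a : ι} {b : κ} (h : IsIsolatedEntry g a b)
    (hg : Function.Injective g) : Function.Injective (entry g a b) := by
  refine (injective_iff_map_eq_zero _).mpr fun x hx => Pi.single_injective a (hg ?_)
  rw [Pi.single_zero, map_zero]
  funext b'
  by_cases hb : b' = b
  · exact hb ▸ hx
  · exact LinearMap.congr_fun (h.col_eq_zero b' hb) x

theorem exists_embedding_of_forall_isIsolatedEntry [∀ a, Nontrivial (M a)]
    (hg : Function.Injective g) (h : ∀ a, ∃ b, IsIsolatedEntry g a b) :
    ∃ σ : ι ↪ κ, (∀ a b, b ≠ σ a → entry g a b = 0) ∧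
      ∀ a, Function.Injective (entry g a (σ a)) := by
  choose σ hσ using h
  refine ⟨⟨σ, fun a a' haa' => ?_⟩, fun a => (hσ a).col_eq_zero,
    fun a => (hσ a).injective_entry hg⟩
  by_contra hne
  exact (hσ a).row_ne hne (LinearMap.ne_zero_of_injective ((hσ a').injective_entry hg)) haa'.symm

theorem IsPivot.exists_clear_row [Finite ι] (hp : IsPivot g a₀ b₀) :
    ∃ (α : (∀ a, M a) ≃ₗ[A] (∀ a, M a)) (h : ∀ a, M a →ₗ[A] M a₀),
      (∀ b, entry (g ∘ₗ α.toLinearMap) a₀ b = entry g a₀ b) ∧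
      (∀ a, a ≠ a₀ → entry g a₀ b₀ ∘ₗ h a = entry g a b₀) ∧
      ∀ a b, a ≠ a₀ →
        entry (g ∘ₗ α.toLinearMap) a b = entry g a b - entry g a₀ b ∘ₗ h a := by
  have := Fintype.ofFinite ι
  choose h hh using hp.exists_row
  let s : (∀ a, M a) →ₗ[A] M a₀ := LinearMap.lsum A M ℕ (Function.update h a₀ 0)
  have hs (a : ι) (x : M a) : s (Pi.single a x) = Function.update h a₀ 0 a x :=
    LinearMap.lsum_piSingle ..
  have hs₀ : s ∘ₗ LinearMap.single A M a₀ = 0 := LinearMap.ext fun x => by simp [hs]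
  refine ⟨blockTransvection _ s hs₀, h, fun b => ?_, fun a _ => hh a, fun a b ha => ?_⟩
  · ext x
    simp [entry_apply, blockTransvection_apply, hs]
  · ext x
    simp [entry_apply, blockTransvection_apply, hs, ha]

theorem exists_clear_col (hrow : ∀ a, a ≠ a₀ → entry g a b₀ = 0)
    (hcol : ∀ b, ∃ k : N b₀ →ₗ[A] N b, k ∘ₗ entry g a₀ b₀ = entry g a₀ b) :
    ∃ β : (∀ b, N b) ≃ₗ[A] (∀ b, N b), (∀ b, b ≠ b₀ → entry (β.toLinearMap ∘ₗ g) a₀ b = 0) ∧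
      ∀ a b, a ≠ a₀ → entry (β.toLinearMap ∘ₗ g) a b = entry g a b := by
  classical
  choose k hk using hcol
  let i : N b₀ →ₗ[A] (∀ b, N b) := LinearMap.pi (Function.update k b₀ 0)
  have hi₀ : LinearMap.proj b₀ ∘ₗ i = 0 := LinearMap.ext fun x => by simp [i]
  refine ⟨blockTransvection i (LinearMap.proj b₀) hi₀, fun b hb => ?_, fun a b ha => ?_⟩
  · ext x
    have hkx : k b (entry g a₀ b₀ x) = entry g a₀ b x := LinearMap.congr_fun (hk b) x
    rw [entry_apply] at hkx
    simp [entry_apply, blockTransvection_apply, i, hb, hkx]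
  · ext x
    have hx : g (Pi.single a x) b₀ = 0 := LinearMap.congr_fun (hrow a ha) x
    simp [entry_apply, blockTransvection_apply, hx]

theorem IsPivot.exists_isIsolatedEntry [Finite ι] [Nontrivial (M a₀)] (hp : IsPivot g a₀ b₀) :
    ∃ (α : (∀ a, M a) ≃ₗ[A] (∀ a, M a)) (β : (∀ b, N b) ≃ₗ[A] (∀ b, N b)),
      IsIsolatedEntry (β.toLinearMap ∘ₗ g ∘ₗ α.toLinearMap) a₀ b₀ ∧
      ∀ c d, c ≠ a₀ → IsIsolatedEntry g c d →
        IsIsolatedEntry (β.toLinearMap ∘ₗ g ∘ₗ α.toLinearMap) c d := by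
  obtain ⟨α, h, hα₀, hh, hα⟩ := hp.exists_clear_row
  have hrow (a : ι) (ha : a ≠ a₀) : entry (g ∘ₗ α.toLinearMap) a b₀ = 0 := by
    rw [hα a b₀ ha, hh a ha, sub_self]
  obtain ⟨β, hβ₀, hβ⟩ := exists_clear_col hrow (by simpa only [hα₀] using hp.exists_col)
  have hschur (a : ι) (b : κ) (ha : a ≠ a₀) :
      entry (β.toLinearMap ∘ₗ g ∘ₗ α.toLinearMap) a b = entry g a b - entry g a₀ b ∘ₗ h a := by
    rw [hβ a b ha, hα a b ha]
  refine ⟨α, β, ⟨hβ₀, fun a ha => by rw [hβ a b₀ ha, hrow a ha]⟩, fun c d hc hcd => ?_⟩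
  have hbd : b₀ ≠ d := hcd.row_ne hc (LinearMap.ne_zero_of_injective hp.injective)
  have hhc : h c = 0 := by
    rw [← LinearMap.cancel_left hp.injective, hh c hc, hcd.col_eq_zero b₀ hbd,
      LinearMap.comp_zero]
  refine ⟨fun b hb => ?_, fun a ha => ?_⟩
  · rw [hschur c b hc, hcd.col_eq_zero b hb, hhc, LinearMap.comp_zero, sub_zero]
  · obtain rfl | ha₀ := eq_or_ne a a₀
    · exact hβ₀ d hbd.symm
    · rw [hschur a d ha₀, hcd.row_eq_zero a ha, hcd.row_eq_zero a₀ hc.symm, LinearMap.zero_comp,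
        sub_zero]

end Diagonalization

section FiniteLength

variable {A : Type} {ι κ : Type*} [Ring A] [DecidableEq ι] [Finite ι] [Finite κ] {M : ι → Type}
  {N : κ → Type} [∀ a, AddCommGroup (M a)] [∀ a, Module A (M a)] [∀ b, AddCommGroup (N b)]
  [∀ b, Module A (N b)] [∀ a, IsNoetherian A (M a)] [∀ a, IsArtinian A (M a)]
  [∀ b, IsNoetherian A (N b)] [∀ b, IsArtinian A (N b)]

theorem exists_isPivot (hM : ∀ a, EmbedsAsWaist A (M a)) (hN : ∀ b, EmbedsAsWaist A (N b))
    {g : (∀ a, M a) →ₗ[A] (∀ b, N b)} (hg : Function.Injective g) {a₁ : ι}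
    (ha₁ : ¬∃ b, IsIsolatedEntry g a₁ b) :
    ∃ a₀ b₀, (¬∃ b, IsIsolatedEntry g a₀ b) ∧ IsPivot g a₀ b₀ := by
  obtain ⟨a₀, ha₀, hmax⟩ := Set.exists_max_image {a | ¬∃ b, IsIsolatedEntry g a b}
    (fun a => Module.length A (M a)) (Set.toFinite _) ⟨a₁, ha₁⟩
  have hcol : Function.Injective (g ∘ₗ LinearMap.single A M a₀) :=
    hg.comp (Pi.single_injective a₀)
  obtain ⟨b₀, hb₀, hmin⟩ := Set.exists_min_image {b | Function.Injective (entry g a₀ b)}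
    (fun b => Module.length A (N b)) (Set.toFinite _)
    ((hM a₀).isUniformMod.exists_injective_of_pi hcol)
  have := (hM a₀).indecomposable.1
  refine ⟨a₀, b₀, ha₀, hb₀, fun a => ?_, fun b => ?_⟩
  · by_cases ha : ∃ d, IsIsolatedEntry g a d
    · obtain ⟨d, hd⟩ := ha
      have haa₀ : a ≠ a₀ := fun h => ha₀ (h ▸ ⟨d, hd⟩)
      have hbd : b₀ ≠ d := hd.row_ne haa₀ (LinearMap.ne_zero_of_injective hb₀)
      exact ⟨0, by rw [hd.col_eq_zero b₀ hbd, LinearMap.comp_zero]⟩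
    · refine ((hM a₀).exists_comp_eq_or_of_uniform (hM a).indecomposable (hN b₀).isUniformMod hb₀
        (entry g a b₀)).elim id fun ⟨h, hh, hcomp⟩ => ?_
      let e := LinearEquiv.ofBijective h (bijective_of_injective_of_length_le hh (hmax a ha))
      exact ⟨e.symm, by rw [← hcomp]; ext x; simp [e]⟩
  · refine ((hN b).exists_eq_comp_or (hN b₀).indecomposable hb₀ (entry g a₀ b)).elim id
      fun ⟨h, hh, hcomp⟩ => ?_
    have hb : Function.Injective (entry g a₀ b) :=
      Function.Injective.of_comp (f := h) (by rw [← LinearMap.coe_comp, hcomp]; exact hb₀)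
    let e := LinearEquiv.ofBijective h (bijective_of_injective_of_length_le hh (hmin b hb))
    exact ⟨e.symm, by rw [← hcomp]; ext x; simp [e]⟩

theorem exists_forall_isIsolatedEntry (hM : ∀ a, EmbedsAsWaist A (M a))
    (hN : ∀ b, EmbedsAsWaist A (N b)) {g : (∀ a, M a) →ₗ[A] (∀ b, N b)}
    (hg : Function.Injective g) :
    ∃ (φ : (∀ a, M a) ≃ₗ[A] (∀ a, M a)) (ψ : (∀ b, N b) ≃ₗ[A] (∀ b, N b)),
      ∀ a, ∃ b, IsIsolatedEntry (ψ.toLinearMap.comp (g.comp φ.symm.toLinearMap)) a b := by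
  induction hS : {a | ∃ b, IsIsolatedEntry g a b} using WellFoundedGT.induction generalizing g with
  | ind S ih =>
    by_cases hall : ∀ a, ∃ b, IsIsolatedEntry g a b
    · exact ⟨LinearEquiv.refl A _, LinearEquiv.refl A _, hall⟩
    · obtain ⟨a₁, ha₁⟩ := not_forall.mp hall
      obtain ⟨a₀, b₀, ha₀, hpivot⟩ := exists_isPivot hM hN hg ha₁
      have := (hM a₀).indecomposable.1
      obtain ⟨α, β, hnew, hold⟩ := hpivot.exists_isIsolatedEntry
      have hlt : S < {a | ∃ b, IsIsolatedEntry (β.toLinearMap ∘ₗ g ∘ₗ α.toLinearMap) a b} := by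
        subst hS
        refine (Set.ssubset_iff_of_subset ?_).mpr ⟨a₀, ⟨b₀, hnew⟩, ha₀⟩
        exact fun c ⟨d, hcd⟩ => ⟨d, hold c d (fun h => ha₀ (h ▸ ⟨d, hcd⟩)) hcd⟩
      obtain ⟨φ, ψ, hφψ⟩ := ih _ hlt (β.injective.comp (hg.comp α.injective)) rfl
      exact ⟨α.symm.trans φ, β.trans ψ, hφψ⟩

end FiniteLength

section RightIdeal

theorem mem_rightIdeal {e x : R} : x ∈ rightIdeal R e ↔ ∃ r, e * r = x := by
  rw [rightIdeal, Submodule.mem_span_singleton, MulOpposite.op_surjective.exists]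
  rfl

theorem self_mem_rightIdeal (e : R) : e ∈ rightIdeal R e :=
  Submodule.mem_span_singleton_self e

instance finite_rightIdeal (e : R) : Module.Finite Rᵐᵒᵖ (rightIdeal R e) :=
  inferInstanceAs (Module.Finite Rᵐᵒᵖ (Submodule.span Rᵐᵒᵖ {e}))

theorem projective_rightIdeal {e : R} (he : IsIdempotentElem e) :
    Module.Projective Rᵐᵒᵖ (rightIdeal R e) := by
  have : Module.Projective Rᵐᵒᵖ R := Module.Projective.of_equiv' (opLinearEquiv Rᵐᵒᵖ).symm
  let s : R →ₗ[Rᵐᵒᵖ] rightIdeal R e :=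
    (LinearMap.mulLeft Rᵐᵒᵖ e).codRestrict _ fun r => mem_rightIdeal.mpr ⟨r, rfl⟩
  refine Module.Projective.of_split (rightIdeal R e).subtype s (LinearMap.ext fun ⟨x, hx⟩ => ?_)
  obtain ⟨r, rfl⟩ := mem_rightIdeal.mp hx
  exact Subtype.ext (by simp [s, ← mul_assoc, he.eq])

theorem exists_rightIdeal_hom_ne_zero {α S : Type*} [Fintype α] [AddCommGroup S] [Module Rᵐᵒᵖ S]
    [Nontrivial S] {e : α → R} (he : ∑ p, e p = 1) :
    ∃ (p : α) (q : rightIdeal R (e p) →ₗ[Rᵐᵒᵖ] S), q ≠ 0 := by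
  obtain ⟨x, hx⟩ := exists_ne (0 : S)
  let g : R →ₗ[Rᵐᵒᵖ] S :=
    LinearMap.toSpanSingleton Rᵐᵒᵖ S x ∘ₗ (opLinearEquiv Rᵐᵒᵖ).toLinearMap
  have hg : ∑ p, g (e p) = x := by rw [← map_sum, he]; exact one_smul Rᵐᵒᵖ x
  obtain ⟨p, -, hp⟩ := Finset.exists_ne_zero_of_sum_ne_zero (hg.trans_ne hx)
  exact ⟨p, g ∘ₗ (rightIdeal R (e p)).subtype,
    fun h0 => hp (LinearMap.congr_fun h0 ⟨e p, self_mem_rightIdeal (e p)⟩)⟩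

end RightIdeal

namespace HaradaData

variable [IsArtinianRing Rᵐᵒᵖ]

theorem exists_isProjectiveWaist_range (H : HaradaData R) (i : Fin H.m) (j : ℕ)
    (hj : j < H.n i) :
    ∃ w : rightIdeal R (H.e i ⟨j, hj⟩) →ₗ[Rᵐᵒᵖ] rightIdeal R (H.e i ⟨0, H.hn i⟩),
      Function.Injective w ∧ IsProjectiveWaist (LinearMap.range w) := by
  induction j with
  | zero => exact ⟨LinearMap.id, Function.injective_id, fun N => Or.inl (by simp)⟩
  | succ j ih =>
    have hj' : j < H.n i := Nat.lt_of_succ_lt hj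
    obtain ⟨w, hw, hwaist⟩ := ih hj'
    have := projective_rightIdeal (H.idem i ⟨j, hj'⟩)
    obtain ⟨e⟩ := H.rad_iso i ⟨j + 1, hj⟩ j.succ_pos
    let P := rightIdeal R (H.e i ⟨j, hj'⟩)
    let t : rightIdeal R (H.e i ⟨j + 1, hj⟩) ≃ₗ[Rᵐᵒᵖ] Module.jacobson Rᵐᵒᵖ P :=
      e.trans (Submodule.equivMapOfInjective P.subtype P.injective_subtype _).symm
    let w' := w ∘ₗ (Module.jacobson Rᵐᵒᵖ P).subtype ∘ₗ t.toLinearMap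
    have hrange : LinearMap.range w' = (Module.jacobson Rᵐᵒᵖ P).map w := by
      rw [LinearMap.range_comp, LinearMap.range_comp_of_range_eq_top _ t.range,
        Submodule.range_subtype]
    exact ⟨w', hw.comp (Subtype.val_injective.comp t.injective),
      hrange ▸ hwaist.map_jacobson (H.indec i ⟨j, hj'⟩) hw⟩

variable {Q : Type} [AddCommGroup Q] [Module Rᵐᵒᵖ Q] [Module.Finite Rᵐᵒᵖ Q]
  [Module.Projective Rᵐᵒᵖ Q]

theorem exists_linearEquiv_rightIdeal (H : HaradaData R) (hQ : IsIndecomposableMod Rᵐᵒᵖ Q) :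
    ∃ i j, Nonempty (Q ≃ₗ[Rᵐᵒᵖ] rightIdeal R (H.e i j)) := by
  have := hQ.1
  obtain ⟨N, hN⟩ := IsCoatomic.exists_coatom (Submodule Rᵐᵒᵖ Q)
  have hsimple : IsSimpleModule Rᵐᵒᵖ (Q ⧸ N) := isSimpleModule_iff_isCoatom.mpr hN
  have := hsimple.nontrivial
  obtain ⟨⟨i, j⟩, q, hq⟩ := exists_rightIdeal_hom_ne_zero (S := Q ⧸ N) H.sum_eq_one
  have := projective_rightIdeal (H.idem i j)
  exact ⟨i, j, hQ.nonempty_linearEquiv (H.indec i j) N.mkQ_surjective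
    (LinearMap.surjective_of_ne_zero hq)⟩

theorem embedsAsWaist (H : HaradaData R) (hQ : IsIndecomposableMod Rᵐᵒᵖ Q) :
    EmbedsAsWaist Rᵐᵒᵖ Q := by
  obtain ⟨i, j, ⟨t⟩⟩ := H.exists_linearEquiv_rightIdeal hQ
  obtain ⟨w, hw, hwaist⟩ := H.exists_isProjectiveWaist_range i j j.2
  have := H.inj i
  refine ⟨hQ, ModuleCat.of Rᵐᵒᵖ (rightIdeal R (H.e i ⟨0, H.hn i⟩)), w ∘ₗ t.toLinearMap, H.inj i,
    (H.indec i _).isUniformMod, hw.comp t.injective, ?_⟩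
  rwa [LinearMap.range_comp_of_range_eq_top _ t.range]

end HaradaData

theorem statement9_general [IsArtinianRing Rᵐᵒᵖ] (H : HaradaData R) {ι κ : Type*}
    [DecidableEq ι] [Finite ι] [Finite κ] {Q : ι → Type} {Q' : κ → Type}
    [∀ a, AddCommGroup (Q a)] [∀ a, Module Rᵐᵒᵖ (Q a)] [∀ a, Module.Finite Rᵐᵒᵖ (Q a)]
    [∀ a, Module.Projective Rᵐᵒᵖ (Q a)] [∀ b, AddCommGroup (Q' b)] [∀ b, Module Rᵐᵒᵖ (Q' b)]
    [∀ b, Module.Finite Rᵐᵒᵖ (Q' b)] [∀ b, Module.Projective Rᵐᵒᵖ (Q' b)]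
    (hQ : ∀ a, IsIndecomposableMod Rᵐᵒᵖ (Q a)) (hQ' : ∀ b, IsIndecomposableMod Rᵐᵒᵖ (Q' b))
    {f : (∀ a, Q a) →ₗ[Rᵐᵒᵖ] (∀ b, Q' b)} (hf : Function.Injective f) :
    ∃ (φ : (∀ a, Q a) ≃ₗ[Rᵐᵒᵖ] (∀ a, Q a)) (ψ : (∀ b, Q' b) ≃ₗ[Rᵐᵒᵖ] (∀ b, Q' b)) (σ : ι ↪ κ),
      (∀ a b, b ≠ σ a →
        entry (ψ.toLinearMap.comp (f.comp φ.symm.toLinearMap)) a b = 0) ∧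
      ∀ a, Function.Injective
        (entry (ψ.toLinearMap.comp (f.comp φ.symm.toLinearMap)) a (σ a)) := by
  have (a : ι) : Nontrivial (Q a) := (hQ a).1
  obtain ⟨φ, ψ, hisolated⟩ := exists_forall_isIsolatedEntry
    (fun a => H.embedsAsWaist (hQ a)) (fun b => H.embedsAsWaist (hQ' b)) hf
  exact ⟨φ, ψ, exists_embedding_of_forall_isIsolatedEntry
    (ψ.injective.comp (hf.comp φ.symm.injective)) hisolated⟩

/-- Lemma 2.4.  Any injective homomorphism
`f : Q_1 ⊕ ⋯ ⊕ Q_k → Q'_1 ⊕ ⋯ ⊕ Q'_l` between direct sums of indecomposable projective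
modules can be diagonalized: `k ≤ l` and there are automorphisms `φ`, `ψ` of source and
target and an injection `σ` such that `ψ ∘ f ∘ φ⁻¹` has zero `(b,a)`-component whenever
`b ≠ σ a`, and injective diagonal components. -/
theorem statement9 (K R : Type) [Field K] [IsAlgClosed K] [Ring R] [Algebra K R]
    [FiniteDimensional K R] (H : HaradaData R) (k l : ℕ)
    (Q : Fin k → ModuleCat.{0} Rᵐᵒᵖ) (Q' : Fin l → ModuleCat.{0} Rᵐᵒᵖ)
    (hQ : ∀ a, Module.Finite Rᵐᵒᵖ ↥(Q a) ∧ Module.Projective Rᵐᵒᵖ ↥(Q a) ∧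
      IsIndecomposableMod Rᵐᵒᵖ ↥(Q a))
    (hQ' : ∀ b, Module.Finite Rᵐᵒᵖ ↥(Q' b) ∧ Module.Projective Rᵐᵒᵖ ↥(Q' b) ∧
      IsIndecomposableMod Rᵐᵒᵖ ↥(Q' b))
    (f : ((a : Fin k) → ↥(Q a)) →ₗ[Rᵐᵒᵖ] ((b : Fin l) → ↥(Q' b)))
    (hf : Function.Injective f) :
    k ≤ l ∧
    ∃ (φ : ((a : Fin k) → ↥(Q a)) ≃ₗ[Rᵐᵒᵖ] ((a : Fin k) → ↥(Q a)))
      (ψ : ((b : Fin l) → ↥(Q' b)) ≃ₗ[Rᵐᵒᵖ] ((b : Fin l) → ↥(Q' b)))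
      (σ : Fin k ↪ Fin l),
      (∀ (a : Fin k) (b : Fin l), b ≠ σ a →
        (LinearMap.proj b).comp
          ((ψ.toLinearMap.comp (f.comp φ.symm.toLinearMap)).comp
            (LinearMap.single Rᵐᵒᵖ (fun a => ↥(Q a)) a)) = 0) ∧
      (∀ a : Fin k,
        Function.Injective
          ((LinearMap.proj (σ a)).comp
            ((ψ.toLinearMap.comp (f.comp φ.symm.toLinearMap)).comp
              (LinearMap.single Rᵐᵒᵖ (fun a => ↥(Q a)) a)))) := by
  have : IsArtinianRing Rᵐᵒᵖ := IsArtinianRing.of_finite K Rᵐᵒᵖ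
  choose hfin hproj hindec using hQ
  choose hfin' hproj' hindec' using hQ'
  obtain ⟨φ, ψ, σ, hσ⟩ := statement9_general H hindec hindec' hf
  exact ⟨by simpa using Fintype.card_le_of_embedding σ, φ, ψ, σ, hσ⟩
end

section
/- Let R be a basic left Harada algebra with idempotent data {e_{ij}} as below. Then the right ideal I := ⊕_{i=1}^m ⊕_{j=1}^{n_i} rad^{n_i - j + 1}(e_{ij}R) of R is a two-sided ideal of R. -/
/-!
Common setup.  `K` is an algebraically closed field and `R` a finite-dimensional associative
unital `K`-algebra.  Right `R`-modules are formalized as modules over the opposite ring `Rᵐᵒᵖ`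
(so that `MulOpposite.op r • x = x * r`).
-/

open MulOpposite

variable {R : Type} [Ring R]

/-!
The radical is functorial: a homomorphism carrying `N` into `N'` carries `rad^k N` into `rad^k N'`,
with equality when it is injective and maps `N` onto `N'`.  Hence `e_{ij}R` embeds into `e_{i1}R`
with image `rad^{j-1}(e_{i1}R)`, and this embedding takes `rad^{n_i-j+1}(e_{ij}R)` onto
`rad^{n_i}(e_{i1}R)`, independently of `j`.  Left multiplication by an element of `R` has components
`e_{ij}R → e_{kl}R`; by injectivity of `e_{k1}R` each of them extends to some
`h : e_{i1}R → e_{k1}R`, so it suffices that `h` takes `rad^{n_i}` into `rad^{n_k}`.  For `i = k`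
this is functoriality.  For `i ≠ k` the image of `h` descends through the radical filtration of
`e_{k1}R`: if it lies in `rad^{t-1}(e_{k1}R) ≅ e_{kt}R`, then it lies in `rad^t(e_{k1}R)`, because
a homomorphism `e_{i1}R → e_{kt}R` with image outside the radical would be an isomorphism.
-/

section Radical

variable {A M M' : Type} [Ring A] [AddCommGroup M] [Module A M] [AddCommGroup M'] [Module A M']

theorem radSub_top : radSub (⊤ : Submodule A M) = Module.jacobson A M :=
  Module.map_jacobson_of_bijective (f := (⊤ : Submodule A M).subtype)
    ⟨Subtype.val_injective, fun x => ⟨⟨x, trivial⟩, rfl⟩⟩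

theorem radSub_le (N : Submodule A M) : radSub N ≤ N :=
  Submodule.map_subtype_le N _

theorem range_inclusion_radSub (N : Submodule A M) :
    LinearMap.range (Submodule.inclusion (radSub_le N)) = radSub ⊤ := by
  rw [Submodule.range_inclusion, radSub_top]
  exact Submodule.comap_map_eq_of_injective N.injective_subtype _

theorem map_radSub_le {f : M →ₗ[A] M'} {N : Submodule A M} {N' : Submodule A M'}
    (h : N.map f ≤ N') : (radSub N).map f ≤ radSub N' := by
  rintro _ ⟨_, ⟨x, hx, rfl⟩, rfl⟩
  let fN : N →ₗ[A] N' := f.restrict (Submodule.map_le_iff_le_comap.1 h)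
  exact ⟨fN x, Module.map_jacobson_le fN ⟨x, hx, rfl⟩, rfl⟩

theorem map_radSub_iterate_le {f : M →ₗ[A] M'} {N : Submodule A M} {N' : Submodule A M'}
    (h : N.map f ≤ N') (k : ℕ) : (radSub^[k] N).map f ≤ radSub^[k] N' := by
  induction k with
  | zero => exact h
  | succ k ih =>
    rw [Function.iterate_succ_apply', Function.iterate_succ_apply']
    exact map_radSub_le ih

theorem map_radSub_of_injective {f : M →ₗ[A] M'} (hf : Function.Injective f)
    (N : Submodule A M) : (radSub N).map f = radSub (N.map f) := by
  let ε : N ≃ₗ[A] N.map f := N.equivMapOfInjective f hf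
  have hε : f ∘ₗ N.subtype = (N.map f).subtype ∘ₗ ε.toLinearMap := rfl
  calc (radSub N).map f
      = ((Module.jacobson A N).map ε.toLinearMap).map (N.map f).subtype := by
        rw [← Submodule.map_comp, ← hε, Submodule.map_comp]; rfl
    _ = radSub (N.map f) := by rw [Module.map_jacobson_of_bijective ε.bijective]; rfl

theorem map_radSub_iterate_of_injective {f : M →ₗ[A] M'} (hf : Function.Injective f)
    (N : Submodule A M) (k : ℕ) : (radSub^[k] N).map f = radSub^[k] (N.map f) :=
  Function.Semiconj.iterate_right (map_radSub_of_injective hf) k N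

theorem map_subtype_radSub_iterate_top (N : Submodule A M) (k : ℕ) :
    (radSub^[k] (⊤ : Submodule A N)).map N.subtype = radSub^[k] N := by
  rw [map_radSub_iterate_of_injective N.injective_subtype, Submodule.map_subtype_top]

end Radical

section Indecomposable

variable {A P Q : Type} [Ring A] [AddCommGroup P] [Module A P] [AddCommGroup Q] [Module A Q]

theorem IsIndecomposableMod.isUnit_or_isNilpotent [IsArtinian A P] [IsNoetherian A P]
    (hP : IsIndecomposableMod A P) (g : Module.End A P) : IsUnit g ∨ IsNilpotent g := by
  obtain ⟨k, hcompl, hk⟩ :=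
    (g.eventually_isCompl_ker_pow_range_pow.and (Filter.eventually_ne_atTop 0)).exists
  rcases hP.2 _ _ hcompl with hker | hrange
  · have hrange : LinearMap.range (g ^ k) = ⊤ := by simpa [hker] using hcompl.sup_eq_top
    have hbij : Function.Bijective (g ^ k) :=
      ⟨LinearMap.ker_eq_bot.1 hker, LinearMap.range_eq_top.1 hrange⟩
    exact .inl ((isUnit_pow_iff hk).1 ((Module.End.isUnit_iff _).2 hbij))
  · exact .inr ⟨k, LinearMap.range_eq_bot.1 hrange⟩

theorem IsIndecomposableMod.isLocalRing_end [IsArtinian A P] [IsNoetherian A P]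
    (hP : IsIndecomposableMod A P) : IsLocalRing (Module.End A P) :=
  have := hP.1
  .of_isUnit_or_isUnit_one_sub_self fun g =>
    (hP.isUnit_or_isNilpotent g).imp_right IsNilpotent.isUnit_one_sub

theorem IsIndecomposableMod.bijective_of_surjective [Module.Projective A Q] [Nontrivial Q]
    (hP : IsIndecomposableMod A P) {f : P →ₗ[A] Q} (hf : Function.Surjective f) :
    Function.Bijective f := by
  obtain ⟨s, hs⟩ := Module.projective_lifting_property f LinearMap.id hf
  have hfs : ∀ y, f (s y) = y := LinearMap.congr_fun hs
  have hidem : IsIdempotentElem (s ∘ₗ f : Module.End A P) :=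
    LinearMap.ext fun x => congrArg s (hfs (f x))
  rcases hP.2 _ _ (LinearMap.IsIdempotentElem.isCompl hidem) with hrange | hker
  · obtain ⟨y, hy⟩ := exists_ne (0 : Q)
    have hsf : s (f (s y)) = 0 := LinearMap.congr_fun (LinearMap.range_eq_bot.1 hrange) (s y)
    have hsy : s y = 0 := by rwa [hfs] at hsf
    exact absurd (by rw [← hfs y, hsy, map_zero]) hy
  · exact ⟨.of_comp (f := s) (LinearMap.ker_eq_bot.1 hker), hf⟩

theorem IsIndecomposableMod.bijective_or_range_le_jacobson [Module.Projective A Q]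
    [IsLocalRing (Module.End A Q)] (hP : IsIndecomposableMod A P) (f : P →ₗ[A] Q) :
    Function.Bijective f ∨ LinearMap.range f ≤ Module.jacobson A Q := by
  refine or_iff_not_imp_right.2 fun hrange => ?_
  obtain ⟨M, hM, hfM⟩ : ∃ M : Submodule A Q, IsCoatom M ∧ ¬ LinearMap.range f ≤ M := by
    by_contra! h
    exact hrange (le_sInf h)
  have hsurj : Function.Surjective (M.mkQ ∘ₗ f) := by
    rw [← LinearMap.range_eq_top, LinearMap.range_comp, Submodule.map_mkQ_eq_top]
    exact hM.2 _ (left_lt_sup.2 hfM)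
  obtain ⟨s, hs⟩ := Module.projective_lifting_property (M.mkQ ∘ₗ f) M.mkQ hsurj
  have hone_sub : LinearMap.range (1 - f ∘ₗ s : Module.End A Q) ≤ M := by
    rintro _ ⟨y, rfl⟩
    exact (Submodule.Quotient.eq M).1 (LinearMap.congr_fun hs y).symm
  have := (Submodule.nontrivial_iff A).1 ⟨M, ⊤, hM.1⟩
  rcases IsLocalRing.isUnit_or_isUnit_of_add_one (add_sub_cancel (f ∘ₗ s) 1) with hunit | hunit
  · exact hP.bijective_of_surjective (.of_comp ((Module.End.isUnit_iff _).1 hunit).2)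
  · have htop := LinearMap.range_eq_top.2 ((Module.End.isUnit_iff _).1 hunit).2
    exact absurd (top_le_iff.1 (htop ▸ hone_sub)) hM.1

end Indecomposable

theorem exists_comp_eq_of_range_le_s10 {A L M N : Type*} [Semiring A] [AddCommMonoid L] [Module A L]
    [AddCommMonoid M] [Module A M] [AddCommMonoid N] [Module A N] {φ : M →ₗ[A] N}
    (hφ : Function.Injective φ) {h : L →ₗ[A] N} (hle : LinearMap.range h ≤ LinearMap.range φ) :
    ∃ h' : L →ₗ[A] M, φ ∘ₗ h' = h := by
  let ε := LinearEquiv.ofInjective φ hφ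
  let hc := h.codRestrict (LinearMap.range φ) fun x => hle ⟨x, rfl⟩
  exact ⟨ε.symm.toLinearMap ∘ₗ hc,
    LinearMap.ext fun x => congrArg Subtype.val (ε.apply_symm_apply (hc x))⟩

theorem mul_mem_rightIdeal (x r : R) : x * r ∈ rightIdeal R x :=
  Submodule.mem_span_singleton.2 ⟨op r, rfl⟩

theorem mul_eq_self_of_mem_rightIdeal {e y : R} (he : IsIdempotentElem e)
    (hy : y ∈ rightIdeal R e) : e * y = y := by
  obtain ⟨a, rfl⟩ := Submodule.mem_span_singleton.1 hy
  rw [mul_smul_comm, he.eq]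

theorem projective_mulOpposite_self : Module.Projective Rᵐᵒᵖ R :=
  have hunop : ⇑(LinearMap.toSpanSingleton Rᵐᵒᵖ R 1) = unop := funext fun a => one_mul a.unop
  .of_equiv (.ofBijective (LinearMap.toSpanSingleton Rᵐᵒᵖ R 1) (hunop ▸ unop_bijective))

namespace HaradaData

variable (H : HaradaData R)

theorem exists_injective_range_eq_radSub_iterate (i : Fin H.m) (t : ℕ) (ht : t < H.n i) :
    ∃ φ : rightIdeal R (H.e i ⟨t, ht⟩) →ₗ[Rᵐᵒᵖ] rightIdeal R (H.e i ⟨0, H.hn i⟩),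
      Function.Injective φ ∧ LinearMap.range φ = radSub^[t] ⊤ := by
  induction t with
  | zero => exact ⟨LinearMap.id, Function.injective_id, LinearMap.range_id⟩
  | succ t ih =>
    obtain ⟨φ, hφ, hrange⟩ := ih (Nat.lt_of_succ_lt ht)
    obtain ⟨ε⟩ := H.rad_iso i ⟨t + 1, ht⟩ t.succ_pos
    have hle := radSub_le (rightIdeal R (H.e i ⟨t, Nat.lt_of_succ_lt ht⟩))
    let ι := Submodule.inclusion hle
    refine ⟨φ ∘ₗ ι ∘ₗ ε.toLinearMap,
      hφ.comp ((Submodule.inclusion_injective hle).comp ε.injective), ?_⟩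
    calc LinearMap.range (φ ∘ₗ ι ∘ₗ ε.toLinearMap)
        = (LinearMap.range ι).map φ := by
          rw [LinearMap.range_comp, LinearEquiv.range_comp]
      _ = radSub (LinearMap.range φ) := by
          rw [range_inclusion_radSub, map_radSub_of_injective hφ, Submodule.map_top]
      _ = radSub^[t + 1] ⊤ := by rw [hrange, Function.iterate_succ_apply']

theorem range_le_radSub_top_of_ne [IsArtinianRing Rᵐᵒᵖ] {p q : Σ i, Fin (H.n i)} (hpq : p ≠ q)
    (f : rightIdeal R (H.e p.1 p.2) →ₗ[Rᵐᵒᵖ] rightIdeal R (H.e q.1 q.2)) :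
    LinearMap.range f ≤ radSub ⊤ := by
  have : Module.Projective Rᵐᵒᵖ (rightIdeal R (H.e q.1 q.2)) :=
    projective_rightIdeal (H.idem q.1 q.2)
  have : Module.Finite Rᵐᵒᵖ (rightIdeal R (H.e q.1 q.2)) := .span_singleton Rᵐᵒᵖ _
  have := (H.indec q.1 q.2).isLocalRing_end
  rw [radSub_top]
  exact ((H.indec p.1 p.2).bijective_or_range_le_jacobson f).resolve_left fun hf =>
    (H.basic p q hpq).false (.ofBijective f hf)

theorem range_le_radSub_iterate_top_of_ne [IsArtinianRing Rᵐᵒᵖ] {i k : Fin H.m} (hik : i ≠ k)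
    (h : rightIdeal R (H.e i ⟨0, H.hn i⟩) →ₗ[Rᵐᵒᵖ] rightIdeal R (H.e k ⟨0, H.hn k⟩))
    (t : ℕ) (ht : t ≤ H.n k) : LinearMap.range h ≤ radSub^[t] ⊤ := by
  induction t with
  | zero => exact le_top
  | succ t ih =>
    obtain ⟨φ, hφ, hrange⟩ := H.exists_injective_range_eq_radSub_iterate k t ht
    obtain ⟨h', rfl⟩ := exists_comp_eq_of_range_le_s10 hφ (hrange ▸ ih (Nat.le_of_succ_le ht))
    have hh' : LinearMap.range h' ≤ radSub ⊤ :=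
      H.range_le_radSub_top_of_ne (p := ⟨i, 0, H.hn i⟩) (q := ⟨k, t, ht⟩)
        (fun heq => hik (congrArg Sigma.fst heq)) h'
    calc LinearMap.range (φ ∘ₗ h')
        = (LinearMap.range h').map φ := LinearMap.range_comp _ _
      _ ≤ (radSub ⊤).map φ := Submodule.map_mono hh'
      _ = radSub (LinearMap.range φ) := by rw [map_radSub_of_injective hφ, Submodule.map_top]
      _ = radSub^[t + 1] ⊤ := by rw [hrange, Function.iterate_succ_apply']

theorem map_radSub_iterate_n_le [IsArtinianRing Rᵐᵒᵖ] {i k : Fin H.m}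
    (h : rightIdeal R (H.e i ⟨0, H.hn i⟩) →ₗ[Rᵐᵒᵖ] rightIdeal R (H.e k ⟨0, H.hn k⟩)) :
    (radSub^[H.n i] ⊤).map h ≤ radSub^[H.n k] ⊤ := by
  by_cases hik : i = k
  · subst hik
    exact map_radSub_iterate_le le_top _
  · exact LinearMap.map_le_range.trans (H.range_le_radSub_iterate_top_of_ne hik h _ le_rfl)

theorem exists_injective_map_radSub_iterate_eq (p : Σ i, Fin (H.n i)) :
    ∃ φ : rightIdeal R (H.e p.1 p.2) →ₗ[Rᵐᵒᵖ] rightIdeal R (H.e p.1 ⟨0, H.hn p.1⟩),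
      Function.Injective φ ∧ (radSub^[H.n p.1 - p.2] ⊤).map φ = radSub^[H.n p.1] ⊤ := by
  obtain ⟨φ, hφ, hrange⟩ := H.exists_injective_range_eq_radSub_iterate p.1 p.2 p.2.isLt
  refine ⟨φ, hφ, ?_⟩
  rw [map_radSub_iterate_of_injective hφ, Submodule.map_top, hrange,
    ← Function.iterate_add_apply, Nat.sub_add_cancel p.2.isLt.le]

theorem map_radSub_iterate_n_sub_le [IsArtinianRing Rᵐᵒᵖ] (p q : Σ i, Fin (H.n i))
    (g : rightIdeal R (H.e p.1 p.2) →ₗ[Rᵐᵒᵖ] rightIdeal R (H.e q.1 q.2)) :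
    (radSub^[H.n p.1 - p.2] ⊤).map g ≤ radSub^[H.n q.1 - q.2] ⊤ := by
  obtain ⟨φ, hφ, hφmap⟩ := H.exists_injective_map_radSub_iterate_eq p
  obtain ⟨ψ, hψ, hψmap⟩ := H.exists_injective_map_radSub_iterate_eq q
  obtain ⟨h, hh⟩ := (H.inj q.1).out φ hφ (ψ ∘ₗ g)
  have hcomm : h ∘ₗ φ = ψ ∘ₗ g := LinearMap.ext hh
  rw [← Submodule.map_le_map_iff_of_injective hψ, ← Submodule.map_comp, ← hcomm,
    Submodule.map_comp, hφmap, hψmap]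
  exact H.map_radSub_iterate_n_le h

theorem mul_mem_radSub_iterate [IsArtinianRing Rᵐᵒᵖ] (p q : Σ i, Fin (H.n i)) (r : R) {y : R}
    (hy : y ∈ radSub^[H.n p.1 - p.2] (rightIdeal R (H.e p.1 p.2))) :
    H.e q.1 q.2 * (r * y) ∈ radSub^[H.n q.1 - q.2] (rightIdeal R (H.e q.1 q.2)) := by
  let g : rightIdeal R (H.e p.1 p.2) →ₗ[Rᵐᵒᵖ] rightIdeal R (H.e q.1 q.2) :=
    (LinearMap.mulLeft Rᵐᵒᵖ (H.e q.1 q.2) ∘ₗ LinearMap.mulLeft Rᵐᵒᵖ r ∘ₗ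
      Submodule.subtype _).codRestrict _ fun z => mul_mem_rightIdeal _ (r * z)
  rw [← map_subtype_radSub_iterate_top] at hy ⊢
  obtain ⟨z, hz, rfl⟩ := hy
  exact ⟨g z, H.map_radSub_iterate_n_sub_le p q g ⟨z, hz, rfl⟩, rfl⟩

end HaradaData

theorem statement10_general [IsArtinianRing Rᵐᵒᵖ] (H : HaradaData R) (r x : R) (hx : x ∈ H.I) :
    r * x ∈ H.I := by
  suffices H.I ≤ H.I.comap (LinearMap.mulLeft Rᵐᵒᵖ r) from this hx
  refine iSup_le fun p y hy => ?_
  have hsum : r * y = ∑ q : Σ i, Fin (H.n i), H.e q.1 q.2 * (r * y) := by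
    rw [← Finset.sum_mul, H.sum_eq_one, one_mul]
  rw [Submodule.mem_comap, LinearMap.mulLeft_apply, hsum]
  exact Submodule.sum_mem _ fun q _ =>
    Submodule.mem_iSup_of_mem q (H.mul_mem_radSub_iterate p q r hy)

/-- Lemma 3.1.  The right ideal `I = ⊕_{i,j} rad^{n_i-j+1}(e_{ij}R)` is a
two-sided ideal of `R` (it is a right ideal by construction; here we assert closure under
left multiplication). -/
theorem statement10 (K R : Type) [Field K] [IsAlgClosed K] [Ring R] [Algebra K R]
    [FiniteDimensional K R] (H : HaradaData R) :
    ∀ r x : R, x ∈ H.I → r * x ∈ H.I := by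
  have : IsArtinianRing Rᵐᵒᵖ := .of_finite K Rᵐᵒᵖ
  exact statement10_general H
end
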